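/- Let F be a finite field, let C ⊆ F^n be a linear code of dimension k with generator matrix G ∈ F^{n×k}, let k' < k, and let Enc be the k'-randomized encoding map for G. Set C_X = C and let C_Z ⊆ F^n be the orthogonal complement of the span of the last k−k' columns of G, and let d_Z be the minimum Hamming weight of a vector in C_Z \ C_X^⊥. Then for every t < n: d_Z > t if and only if Enc is t-ZK. -/

import Mathlib

/-!
Restricted to a coordinate set `I`, the encoding is a message part plus a uniform randomness part,
so it hides the message iff the message part takes its values in the range of the randomness part.
With `W` the span of the last columns, this says that every codeword agrees on `I` with some
element of `W`, i.e. `C ≤ W ⊔ Z` where `Z` consists of the vectors vanishing on `I`. Taking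
orthogonal complements turns this into `W^⊥ ⊓ Z^⊥ ≤ C^⊥`, and `Z^⊥` consists of the vectors
supported in `I`: no vector of `W^⊥ \ C^⊥` may be supported on `t` coordinates.
-/

/-- Concatenation `(m, r) ∈ F^k` of a message `m ∈ F^{k'}` (first `k'` coordinates)
with randomness `r ∈ F^{k-k'}` (last `k - k'` coordinates). -/
def concat {F : Type*} {k k' : ℕ} (m : Fin k' → F) (r : Fin (k - k') → F) : Fin k → F :=
  fun j => if hj : (j : ℕ) < k' then m ⟨j, hj⟩
           else r ⟨(j : ℕ) - k', by have := j.isLt; omega⟩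

/-- The orthogonal complement `W^⊥` of a subspace `W ⊆ F^n` with respect to the
bilinear form `⟨u,v⟩ = ∑ i, u i * v i`. -/
def dualCode {F : Type*} [Field F] {n : ℕ} (W : Submodule F (Fin n → F)) :
    Submodule F (Fin n → F) where
  carrier := {u | ∀ w ∈ W, ∑ i, u i * w i = 0}
  add_mem' := by
    intro a b ha hb w hw
    simp only [Set.mem_setOf_eq] at *
    simp [Pi.add_apply, add_mul, Finset.sum_add_distrib, ha w hw, hb w hw]
  zero_mem' := by intro w hw; simp
  smul_mem' := by
    intro c a ha w hw
    simp only [Set.mem_setOf_eq] at *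
    simp [Pi.smul_apply, smul_eq_mul, mul_assoc, ← Finset.mul_sum, ha w hw]

/-- The span of the last `k - k'` columns of `G` (the columns with index `≥ k'`). -/
def lastColSpan {F : Type*} [Field F] {n k : ℕ} (G : Matrix (Fin n) (Fin k) F) (k' : ℕ) :
    Submodule F (Fin n → F) :=
  Submodule.span F {v | ∃ j : Fin k, k' ≤ (j : ℕ) ∧ v = fun i => G i j}

/-- The `k'`-randomized encoding map for `G` is decodable from `e` errors: there is a
deterministic decoder `D` recovering `m` from `G·(m,r) + y` whenever `wt(y) ≤ e`. -/
def DecodableFromErrors {F : Type*} [Field F] [DecidableEq F] {n k : ℕ}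
    (G : Matrix (Fin n) (Fin k) F) (k' e : ℕ) : Prop :=
  ∃ D : (Fin n → F) → (Fin k' → F),
    ∀ (m : Fin k' → F) (r : Fin (k - k') → F) (y : Fin n → F),
      hammingNorm y ≤ e → D (G.mulVec (concat m r) + y) = m

/-- The `k'`-randomized encoding map for `G` is `t`-zero-knowledge: for every set `I` of `t`
coordinates and every pair of messages `m, m'`, the restrictions `Enc(m)|_I` and `Enc(m')|_I`
are identically distributed (over uniformly random `r`), i.e. each value `v ∈ F^I` is hit by
the same number of choices of randomness `r`. -/
def IsZK {F : Type*} [Field F] {n k : ℕ} (G : Matrix (Fin n) (Fin k) F) (k' t : ℕ) : Prop :=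
  ∀ I : Finset (Fin n), I.card = t →
    ∀ m m' : Fin k' → F, ∀ v : {i // i ∈ I} → F,
      Nat.card {r : Fin (k - k') → F //
          ∀ i : {i // i ∈ I}, G.mulVec (concat m r) i.1 = v i} =
      Nat.card {r : Fin (k - k') → F //
          ∀ i : {i // i ∈ I}, G.mulVec (concat m' r) i.1 = v i}

theorem card_fiber_add_eq_iff_range_subset {A B V Φ Ψ : Type*} [AddGroup A] [AddGroup B]
    [AddGroup V] [Finite B] [FunLike Φ A V] [AddMonoidHomClass Φ A V] [FunLike Ψ B V]
    [AddMonoidHomClass Ψ B V] (f : Φ) (g : Ψ) :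
    (∀ a a' v, Nat.card {b // f a + g b = v} = Nat.card {b // f a' + g b = v}) ↔
      Set.range f ⊆ Set.range g := by
  constructor
  · rintro hcard _ ⟨a, rfl⟩
    have : Nonempty {b // f a + g b = f a} := ⟨0, by simp⟩
    have hpos : 0 < Nat.card {b // f 0 + g b = f a} := hcard a 0 (f a) ▸ Nat.card_pos
    obtain ⟨⟨b, hb⟩⟩ := (Nat.card_pos_iff.mp hpos).1
    exact ⟨b, by simpa using hb⟩
  · intro hrange a a' v
    obtain ⟨b₀, hb₀⟩ := hrange ⟨-a' + a, rfl⟩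
    refine Nat.card_congr ((Equiv.addLeft b₀).subtypeEquiv fun b => ?_)
    have hshift : f a' + g (b₀ + b) = f a + g b := by
      rw [map_add g, hb₀, ← add_assoc, ← map_add f, add_neg_cancel_left]
    rw [Equiv.coe_addLeft, hshift]

section Duality

variable {F : Type*} [Field F] {n : ℕ}

theorem dualCode_eq_comap_dualAnnihilator (W : Submodule F (Fin n → F)) :
    dualCode W = W.dualAnnihilator.comap (dotProductEquiv F (Fin n)).toLinearMap := by
  ext c
  simp only [Submodule.mem_comap, Submodule.mem_dualAnnihilator]
  rfl

theorem dualCode_le_dualCode_iff {U W : Submodule F (Fin n → F)} :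
    dualCode U ≤ dualCode W ↔ W ≤ U := by
  rw [dualCode_eq_comap_dualAnnihilator, dualCode_eq_comap_dualAnnihilator,
    Submodule.comap_le_comap_iff_of_surjective (dotProductEquiv F (Fin n)).surjective,
    Subspace.dualAnnihilator_le_dualAnnihilator_iff]

theorem dualCode_sup (U W : Submodule F (Fin n → F)) :
    dualCode (U ⊔ W) = dualCode U ⊓ dualCode W := by
  simp only [dualCode_eq_comap_dualAnnihilator, Submodule.dualAnnihilator_sup_eq,
    Submodule.comap_inf]

/-- The projection `F^n → F^I` onto the coordinates in `I`, i.e. what an observer of `I` sees of a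
codeword. -/
def coordRestrict (F : Type*) [Field F] (I : Finset (Fin n)) : (Fin n → F) →ₗ[F] (I → F) :=
  LinearMap.funLeft F F (↑)

theorem mem_ker_coordRestrict {I : Finset (Fin n)} {c : Fin n → F} :
    c ∈ LinearMap.ker (coordRestrict F I) ↔ ∀ i ∈ I, c i = 0 := by
  simp [coordRestrict, funext_iff, LinearMap.funLeft_apply]

theorem mem_dualCode_ker_coordRestrict {I : Finset (Fin n)} {c : Fin n → F} :
    c ∈ dualCode (LinearMap.ker (coordRestrict F I)) ↔ ∀ i, c i ≠ 0 → i ∈ I := by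
  constructor
  · intro hc i hci
    by_contra hiI
    have hsingle : Pi.single i 1 ∈ LinearMap.ker (coordRestrict F I) :=
      mem_ker_coordRestrict.mpr fun j hj => Pi.single_eq_of_ne (by rintro rfl; exact hiI hj) 1
    exact hci (by simpa [Pi.single_apply] using hc _ hsingle)
  · intro hc z hz
    refine Finset.sum_eq_zero fun i _ => ?_
    by_cases hci : c i = 0
    · rw [hci, zero_mul]
    · rw [mem_ker_coordRestrict.mp hz i (hc i hci), mul_zero]

theorem map_coordRestrict_le_iff {U W : Submodule F (Fin n → F)} {I : Finset (Fin n)} :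
    U.map (coordRestrict F I) ≤ W.map (coordRestrict F I) ↔
      ∀ c ∈ dualCode W, (∀ i, c i ≠ 0 → i ∈ I) → c ∈ dualCode U := by
  rw [LinearMap.map_le_map_iff, ← dualCode_le_dualCode_iff, dualCode_sup]
  simp only [SetLike.le_def, Submodule.mem_inf, mem_dualCode_ker_coordRestrict, and_imp]

end Duality

theorem exists_card_eq_and_support_subset_iff {ι R : Type*} [Fintype ι] [Zero R] [DecidableEq R]
    {t : ℕ} (ht : t ≤ Fintype.card ι) (c : ι → R) :
    (∃ I : Finset ι, I.card = t ∧ ∀ i, c i ≠ 0 → i ∈ I) ↔ hammingNorm c ≤ t := by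
  constructor
  · rintro ⟨I, rfl, hI⟩
    exact Finset.card_le_card fun i hi => hI i (Finset.mem_filter.mp hi).2
  · intro hc
    obtain ⟨I, hsupp, hI⟩ := Finset.exists_superset_card_eq hc ht
    exact ⟨I, hI, fun i hi => hsupp (Finset.mem_filter.mpr ⟨Finset.mem_univ i, hi⟩)⟩

section Encoding

variable {F : Type*}

theorem exists_concat_eq {k k' : ℕ} (hk : k' ≤ k) (x : Fin k → F) :
    ∃ (m : Fin k' → F) (r : Fin (k - k') → F), concat m r = x := by
  refine ⟨fun i => x (i.castLE hk), fun i => x ⟨i + k', by omega⟩, funext fun j => ?_⟩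
  unfold concat
  split_ifs with hj
  · rfl
  · simp only [Nat.sub_add_cancel (not_lt.mp hj)]

variable [Field F] {n k : ℕ}

/-- Concatenation of message and randomness as a linear map, used to split the encoding into its
message and randomness parts. -/
def concatLinearMap (F : Type*) [Field F] (k k' : ℕ) :
    (Fin k' → F) × (Fin (k - k') → F) →ₗ[F] (Fin k → F) where
  toFun p := concat p.1 p.2
  map_add' p q := by
    ext j
    simp only [concat, Pi.add_apply, Prod.fst_add, Prod.snd_add]
    split_ifs <;> rfl
  map_smul' a p := by
    ext j
    simp only [concat, Pi.smul_apply, Prod.smul_fst, Prod.smul_snd, RingHom.id_apply]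
    split_ifs <;> rfl

/-- The contribution `m ↦ G·(m,0)` of the message to the randomized encoding. -/
def messageMap (G : Matrix (Fin n) (Fin k) F) (k' : ℕ) : (Fin k' → F) →ₗ[F] (Fin n → F) :=
  G.mulVecLin ∘ₗ concatLinearMap F k k' ∘ₗ LinearMap.inl F _ _

/-- The contribution `r ↦ G·(0,r)` of the randomness to the randomized encoding. -/
def randomnessMap (G : Matrix (Fin n) (Fin k) F) (k' : ℕ) :
    (Fin (k - k') → F) →ₗ[F] (Fin n → F) :=
  G.mulVecLin ∘ₗ concatLinearMap F k k' ∘ₗ LinearMap.inr F _ _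

variable (G : Matrix (Fin n) (Fin k) F) {k' : ℕ}

theorem randomnessMap_apply (r : Fin (k - k') → F) :
    randomnessMap G k' r = G.mulVec (concat 0 r) :=
  rfl

theorem mulVec_concat (m : Fin k' → F) (r : Fin (k - k') → F) :
    G.mulVec (concat m r) = messageMap G k' m + randomnessMap G k' r := by
  have hsplit := LinearMap.congr_fun
    (LinearMap.coprod_comp_inl_inr (G.mulVecLin ∘ₗ concatLinearMap F k k')) (m, r)
  exact hsplit.symm

theorem range_randomnessMap : LinearMap.range (randomnessMap G k') = lastColSpan G k' := by
  apply le_antisymm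
  · rintro _ ⟨r, rfl⟩
    rw [randomnessMap_apply, Matrix.mulVec_eq_sum]
    refine Submodule.sum_mem _ fun j _ => ?_
    rw [op_smul_eq_smul]
    by_cases hj : (j : ℕ) < k'
    · simp [concat, hj]
    · exact Submodule.smul_mem _ _ (Submodule.subset_span ⟨j, not_lt.mp hj, rfl⟩)
  · refine Submodule.span_le.mpr ?_
    rintro _ ⟨j, hj, rfl⟩
    refine ⟨Pi.single ⟨j - k', by omega⟩ 1, ?_⟩
    have hconcat : concat (0 : Fin k' → F) (Pi.single ⟨j - k', by omega⟩ 1) = Pi.single j 1 := by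
      ext i
      simp only [concat, Pi.single_apply, Fin.ext_iff, Pi.zero_apply]
      grind
    rw [randomnessMap_apply, hconcat, Matrix.mulVec_single_one]
    rfl

theorem range_messageMap_sup_lastColSpan (hk : k' ≤ k) :
    LinearMap.range (messageMap G k') ⊔ lastColSpan G k' = LinearMap.range G.mulVecLin := by
  rw [← range_randomnessMap]
  apply le_antisymm
  · exact sup_le (LinearMap.range_comp_le_range _ _) (LinearMap.range_comp_le_range _ _)
  · rintro _ ⟨x, rfl⟩
    obtain ⟨m, r, rfl⟩ := exists_concat_eq hk x
    rw [Matrix.mulVecLin_apply, mulVec_concat]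
    exact Submodule.add_mem_sup ⟨m, rfl⟩ ⟨r, rfl⟩

theorem card_fiber_encoding_eq_iff [Finite F] (hk : k' ≤ k) (I : Finset (Fin n)) :
    (∀ (m m' : Fin k' → F) (v : {i // i ∈ I} → F),
      Nat.card {r : Fin (k - k') → F // ∀ i : {i // i ∈ I}, G.mulVec (concat m r) i = v i} =
      Nat.card {r : Fin (k - k') → F // ∀ i : {i // i ∈ I}, G.mulVec (concat m' r) i = v i}) ↔
    (LinearMap.range G.mulVecLin).map (coordRestrict F I) ≤
      (lastColSpan G k').map (coordRestrict F I) := by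
  have hfiber (m : Fin k' → F) (r : Fin (k - k') → F) (v : I → F) :
      (∀ i : I, G.mulVec (concat m r) i = v i) ↔
        (coordRestrict F I ∘ₗ messageMap G k') m + (coordRestrict F I ∘ₗ randomnessMap G k') r
          = v := by
    rw [LinearMap.comp_apply, LinearMap.comp_apply, ← map_add, ← mulVec_concat, funext_iff]
    rfl
  simp only [hfiber]
  rw [card_fiber_add_eq_iff_range_subset, ← LinearMap.coe_range, ← LinearMap.coe_range,
    SetLike.coe_subset_coe, LinearMap.range_comp, LinearMap.range_comp, range_randomnessMap,
    ← range_messageMap_sup_lastColSpan G hk, Submodule.map_sup, sup_le_iff, and_iff_left le_rfl]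

end Encoding

theorem dZ_iff_zk_general {F : Type*} [Field F] [Finite F] [DecidableEq F] {n k k' t : ℕ}
    (G : Matrix (Fin n) (Fin k) F) (hk : k' ≤ k) (ht : t ≤ n) :
    (∀ c ∈ dualCode (lastColSpan G k'), c ∉ dualCode (LinearMap.range G.mulVecLin) →
      t < hammingNorm c) ↔ IsZK G k' t := by
  calc
    _ ↔ ∀ c ∈ dualCode (lastColSpan G k'),
          (∃ I : Finset (Fin n), I.card = t ∧ ∀ i, c i ≠ 0 → i ∈ I) →
          c ∈ dualCode (LinearMap.range G.mulVecLin) := by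
      refine forall₂_congr fun c _ => ?_
      rw [exists_card_eq_and_support_subset_iff (ht.trans_eq (Fintype.card_fin n).symm),
        ← not_lt, not_imp_comm]
    _ ↔ ∀ I : Finset (Fin n), I.card = t → ∀ c ∈ dualCode (lastColSpan G k'),
          (∀ i, c i ≠ 0 → i ∈ I) → c ∈ dualCode (LinearMap.range G.mulVecLin) := by
      grind
    _ ↔ IsZK G k' t := by
      simp only [IsZK, card_fiber_encoding_eq_iff G hk, map_coordRestrict_le_iff]

/-- With `C_X = C`, `C_Z` the orthogonal complement of the span of the last
`k - k'` columns of the generator matrix `G`, and `d_Z` the minimum Hamming weight of a vector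
in `C_Z \ C_X^⊥`: for every `t < n`, `d_Z > t` iff the `k'`-randomized encoding map for `G`
is `t`-zero-knowledge. -/
theorem dZ_iff_zk
    {F : Type*} [Field F] [Fintype F] [DecidableEq F] {n k k' : ℕ}
    (C : Submodule F (Fin n → F)) (G : Matrix (Fin n) (Fin k) F)
    (hGfullrank : Function.Injective G.mulVecLin)
    (hGspan : LinearMap.range G.mulVecLin = C)
    (hdim : Module.finrank F C = k)
    (hk' : k' < k)
    (CX CZ : Submodule F (Fin n → F))
    (hCX : CX = C)
    (hCZ : CZ = dualCode (lastColSpan G k'))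
    (dZ : ℕ)
    (hdZ : IsLeast {w | ∃ c, c ∈ CZ ∧ c ∉ dualCode CX ∧ hammingNorm c = w} dZ) :
    ∀ t : ℕ, t < n → (t < dZ ↔ IsZK G k' t) := by
  subst hGspan hCX hCZ
  intro t ht
  rw [hdZ.lt_iff, ← dZ_iff_zk_general G hk'.le ht.le]
  grind
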